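/- Let a ≤ x be real numbers, let N be a natural number, and let g : ℝ → ℝ be Lebesgue integrable on [a,x]. Then the integral of the function (t_1, …, t_{N+1}) ↦ g(t_{N+1}) over the ordered simplex S_{N+1} := {t ∈ ℝ^{N+1} : a ≤ t_{N+1} ≤ t_N ≤ … ≤ t_1 ≤ x} with respect to (N+1)-dimensional Lebesgue measure equals ∫_a^x g(t) · (x−t)ᴺ / N! dt. -/

import Mathlib

/-!
Splitting off the last (smallest) coordinate `t = u_{N+1}` identifies the ordered simplex with
`{(t, v) : t ∈ [a,x], v ∈ S_N(t, x)}`, where `S_N(t, x)` is the ordered simplex with lower bound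
`t`. Iterating this on volumes gives `vol S_N(t, x) = (x - t)ᴺ / N!` (`volume_simplex`). Since
`g(t)` does not depend on `v`, Fubini's theorem turns the integral over the simplex into
`∫ g(t) vol S_N(t, x) dt`. Fubini applies because the simplex lies in `[a,x] × [a,x]ᴺ`, on which
`(t, v) ↦ g t` is integrable, the second factor having finite measure.
-/

open MeasureTheory Set

namespace OrderedSimplex

/-- The ordered simplex `{u : x ≥ u 0 ≥ u 1 ≥ … ≥ u (n-1) ≥ a}` in `ℝⁿ`; for `n = 0` it is the
whole one-point space, whatever `a` and `x` are. -/
def simplex (n : ℕ) (a x : ℝ) : Set (Fin n → ℝ) :=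
  {u | (∀ i j : Fin n, i ≤ j → u j ≤ u i) ∧ ∀ i, u i ∈ Icc a x}

/-- The ordered simplex in `ℝⁿ⁺¹` as a subset of `ℝ × ℝⁿ`, the first factor carrying the last
coordinate. -/
def fibered (n : ℕ) (a x : ℝ) : Set (ℝ × (Fin n → ℝ)) :=
  {p | p.1 ∈ Icc a x ∧ p.2 ∈ simplex n p.1 x}

lemma measurableSet_fibered (n : ℕ) (a x : ℝ) : MeasurableSet (fibered n a x) := by
  have h : fibered n a x = ({p | a ≤ p.1} ∩ {p | p.1 ≤ x}) ∩
      ((⋂ (i : Fin n) (j : Fin n) (_ : i ≤ j), {p | p.2 j ≤ p.2 i}) ∩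
        ⋂ i : Fin n, {p | p.1 ≤ p.2 i} ∩ {p | p.2 i ≤ x}) := by
    ext p
    simp [fibered, simplex]
  rw [h]
  refine IsClosed.measurableSet (IsClosed.inter (IsClosed.inter ?_ ?_) (IsClosed.inter ?_ ?_))
  · exact isClosed_le (by fun_prop) (by fun_prop)
  · exact isClosed_le (by fun_prop) (by fun_prop)
  · exact isClosed_iInter fun i => isClosed_iInter fun j => isClosed_iInter fun _ =>
      isClosed_le (by fun_prop) (by fun_prop)
  · exact isClosed_iInter fun i =>
      (isClosed_le (by fun_prop) (by fun_prop)).inter (isClosed_le (by fun_prop) (by fun_prop))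

lemma preimage_fibered (n : ℕ) (a x : ℝ) :
    MeasurableEquiv.piFinSuccAbove (fun _ => ℝ) (Fin.last n) ⁻¹' fibered n a x =
      simplex (n + 1) a x := by
  ext u
  have h : MeasurableEquiv.piFinSuccAbove (fun _ => ℝ) (Fin.last n) u =
      (u (Fin.last n), fun i => u i.castSucc) := by
    ext <;> simp [MeasurableEquiv.piFinSuccAbove, Fin.insertNthEquiv, Fin.init]
  rw [mem_preimage, h]
  simp only [fibered, simplex, mem_ofPred_eq, mem_Icc]
  constructor
  · rintro ⟨⟨h1, h2⟩, h3, h4⟩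
    constructor
    · intro i j hij
      induction j using Fin.lastCases with
      | last =>
        induction i using Fin.lastCases with
        | last => exact le_rfl
        | cast i => exact (h4 i).1
      | cast j =>
        induction i using Fin.lastCases with
        | last => exact absurd hij (not_le.2 (Fin.castSucc_lt_last j))
        | cast i => exact h3 i j (by simpa using hij)
    · intro i
      induction i using Fin.lastCases with
      | last => exact ⟨h1, h2⟩
      | cast i => exact ⟨h1.trans (h4 i).1, (h4 i).2⟩
  · rintro ⟨h1, h2⟩
    exact ⟨h2 _, fun i j hij => h1 _ _ (by simpa using hij),
      fun i => ⟨h1 _ _ (Fin.le_last _), (h2 _).2⟩⟩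

lemma volume_simplex (n : ℕ) : ∀ a x : ℝ, a ≤ x →
    volume (simplex n a x) = ENNReal.ofReal ((x - a) ^ n / n.factorial) := by
  induction n with
  | zero =>
    intro a x _
    have : simplex 0 a x = univ := by ext; simp [simplex]
    rw [this, volume_pi, Measure.pi_of_empty]
    simp
  | succ n ih =>
    intro a x hax
    have hfib (t : ℝ) : volume (Prod.mk t ⁻¹' fibered n a x) =
        (Icc a x).indicator (fun t => ENNReal.ofReal ((x - t) ^ n / n.factorial)) t := by
      by_cases ht : t ∈ Icc a x
      · rw [indicator_of_mem ht, ← ih t x ht.2]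
        congr 1
        ext v
        simp only [fibered, mem_preimage, mem_ofPred_eq, ht, true_and]
      · rw [indicator_of_notMem ht]
        simp only [fibered, preimage_ofPred_eq, ht, false_and, ofPred_false, measure_empty]
    rw [← preimage_fibered, (volume_preserving_piFinSuccAbove (fun _ => ℝ)
      (Fin.last n)).measure_preimage (measurableSet_fibered n a x).nullMeasurableSet,
      Measure.volume_eq_prod, Measure.prod_apply (measurableSet_fibered n a x)]
    simp only [hfib]
    rw [lintegral_indicator measurableSet_Icc, ← ofReal_integral_eq_lintegral_ofReal]
    · congr 1
      rw [integral_Icc_eq_integral_Ioc, ← intervalIntegral.integral_of_le hax,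
        intervalIntegral.integral_div,
        intervalIntegral.integral_comp_sub_left (fun t => t ^ n) x, integral_pow,
        Nat.factorial_succ]
      push_cast
      simp
      field_simp
    · exact (Continuous.continuousOn (by fun_prop)).integrableOn_Icc
    · filter_upwards [ae_restrict_mem measurableSet_Icc] with t ht
      have := sub_nonneg.2 ht.2
      simp only [Pi.zero_apply]
      positivity

end OrderedSimplex

open OrderedSimplex in
/-- If `g` is Lebesgue integrable on `[a,x]`, the integral of
`(t₁, …, t_{N+1}) ↦ g(t_{N+1})` over the ordered simplex
`S_{N+1} = {u ∈ ℝ^{N+1} : a ≤ u_{N+1} ≤ u_N ≤ … ≤ u_1 ≤ x}` with respect to the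
`(N+1)`-dimensional Lebesgue measure equals `∫_a^x g(t) ⬝ (x-t)ᴺ / N! dt`. -/
theorem integral_orderedSimplex (a x : ℝ) (hax : a ≤ x) (N : ℕ) (g : ℝ → ℝ)
    (hg : IntegrableOn g (Icc a x)) :
    (∫ u in {u : Fin (N + 1) → ℝ | (∀ i j : Fin (N + 1), i ≤ j → u j ≤ u i) ∧
        ∀ i, u i ∈ Icc a x}, g (u (Fin.last N))) =
      ∫ t in Icc a x, g t * ((x - t) ^ N / (Nat.factorial N)) := by
  have hT := measurableSet_fibered N a x
  have hint : IntegrableOn (fun p : ℝ × (Fin N → ℝ) => g p.1) (fibered N a x) := by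
    have hbox : IntegrableOn (fun p : ℝ × (Fin N → ℝ) => g p.1)
        (Icc a x ×ˢ Icc (fun _ => a) (fun _ => x)) := by
      rw [IntegrableOn, Measure.volume_eq_prod, ← Measure.prod_restrict]
      have : IsFiniteMeasure ((volume : Measure (Fin N → ℝ)).restrict
        (Icc (fun _ => a) (fun _ => x))) := ⟨by simpa using isCompact_Icc.measure_lt_top⟩
      exact Integrable.comp_fst hg _
    refine hbox.mono_set fun p hp => ⟨hp.1, ?_, ?_⟩
    · exact fun i => hp.1.1.trans (hp.2.2 i).1
    · exact fun i => (hp.2.2 i).2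
  have hmp := volume_preserving_piFinSuccAbove (fun _ : Fin (N + 1) => ℝ) (Fin.last N)
  have h1 := hmp.setIntegral_preimage_emb (MeasurableEquiv.measurableEmbedding _)
    (fun p => g p.1) (fibered N a x)
  rw [preimage_fibered] at h1
  refine Eq.trans h1 ?_
  rw [← integral_indicator hT, Measure.volume_eq_prod, integral_prod _
    (by rw [← Measure.volume_eq_prod]; exact (integrable_indicator_iff hT).2 hint),
    ← integral_indicator measurableSet_Icc]
  congr 1
  ext t
  by_cases ht : t ∈ Icc a x
  · have hS : MeasurableSet (simplex N t x) := by
      have := measurable_prodMk_left (x := t) hT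
      simpa only [fibered, preimage_ofPred_eq, ht, true_and, ofPred_mem_eq] using this
    have h2 (v : Fin N → ℝ) : (fibered N a x).indicator (fun p => g p.1) (t, v) =
        (simplex N t x).indicator (fun _ => g t) v := by
      have hiff : (t, v) ∈ fibered N a x ↔ v ∈ simplex N t x :=
        ⟨fun h => h.2, fun h => ⟨ht, h⟩⟩
      by_cases hv : v ∈ simplex N t x
      · rw [indicator_of_mem hv, indicator_of_mem (hiff.2 hv)]
      · rw [indicator_of_notMem hv, indicator_of_notMem (mt hiff.1 hv)]
    have := sub_nonneg.2 ht.2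
    simp only [h2]
    rw [indicator_of_mem ht, integral_indicator hS, setIntegral_const, smul_eq_mul, mul_comm,
      measureReal_def, volume_simplex N t x ht.2, ENNReal.toReal_ofReal (by positivity)]
  · have h2 (v : Fin N → ℝ) : (fibered N a x).indicator (fun p => g p.1) (t, v) = 0 :=
      indicator_of_notMem (fun h => ht h.1) _
    simp only [h2, indicator_of_notMem ht, integral_zero]
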